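/- Let φ = (1+√5)/2 and define R(x) = 1 if 1 ≤ x < φ, R(x) = 3/2 if φ ≤ x < 2, and R(x) = ⌊x⌋ if x ≥ 2. Let v > 0 and let S and S' be finite multisets of real numbers, each element at least 1. Suppose ∑_{x ∈ S'} x ≤ v and 1 + ∑_{x ∈ S} x > φ·v. Then ∑_{x ∈ S'} R(x) ≤ ∑_{x ∈ S} R(x). -/

import Mathlib

/-!
STATEMENT 12: The per-drone comparison of rounded loads
(`L'_i(Opt) ≤ L'_i(Alg_0)`, Lemma "main" of the paper):
for the rounding function `R`, if `S, S'` are finite multisets of reals each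
at least `1`, `∑_{x ∈ S'} x ≤ v` and `1 + ∑_{x ∈ S} x > φ·v`, then
`∑_{x ∈ S'} R x ≤ ∑_{x ∈ S} R x`, where `φ = (1+√5)/2`.
-/

/-- The rounding function from the paper's analysis of LPT:
`R x = 1` if `1 ≤ x < φ`, `R x = 3/2` if `φ ≤ x < 2`, `R x = ⌊x⌋` if `x ≥ 2`,
where `φ = (1+√5)/2`. -/
noncomputable def R (x : ℝ) : ℝ :=
  if x < (1 + Real.sqrt 5) / 2 then 1
  else if x < 2 then 3 / 2
  else (⌊x⌋ : ℝ)

/-!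
Write `ρ`, `ρ'` for the rounded loads of `S`, `S'`. For `x ≥ 1` we have `R x ≤ x ≤ φ * R x`, so the
hypotheses give `φ * (ρ' - ρ) < 1`. If all rounded values are integers, this already forces
`ρ' ≤ ρ`. Otherwise some element of `S` or `S'` lies in `[φ, 2)`; the rounded loads are then only
half-integers, but that single element has enough slack in one of the two pointwise bounds to
improve the estimate to `ρ' - ρ < 1 / 2`. For an element of `S'` there is no room to spare: the
improved bound is exactly `1 / 2`, by `φ ^ 2 = φ + 1`.
-/

open Real
open scoped goldenRatio

theorem le_of_mem_zmultiples_of_lt_add {G : Type*} [AddCommGroup G] [LinearOrder G]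
    [IsOrderedAddMonoid G] {a b c : G} (hc : 0 < c) (ha : a ∈ AddSubgroup.zmultiples c)
    (hb : b ∈ AddSubgroup.zmultiples c) (h : a < b + c) : a ≤ b := by
  obtain ⟨m, rfl⟩ := AddSubgroup.mem_zmultiples_iff.mp ha
  obtain ⟨n, rfl⟩ := AddSubgroup.mem_zmultiples_iff.mp hb
  rw [← add_one_zsmul, zsmul_lt_zsmul_iff_left hc] at h
  exact zsmul_le_zsmul_left hc.le (Int.lt_add_one_iff.mp h)

theorem sum_map_add_le_sum_map_of_mem {ι M : Type*} [AddCommMonoid M] [Preorder M]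
    [AddLeftMono M] {s : Multiset ι} {f g : ι → M} {i : ι} {c : M}
    (hfg : ∀ j ∈ s, f j ≤ g j) (hi : i ∈ s) (hc : f i + c ≤ g i) :
    (s.map f).sum + c ≤ (s.map g).sum := by
  obtain ⟨t, rfl⟩ := Multiset.exists_cons_of_mem hi
  simp only [Multiset.map_cons, Multiset.sum_cons]
  rw [add_right_comm]
  exact add_le_add hc
    (Multiset.sum_map_le_sum_map f g fun j hj ↦ hfg j (Multiset.mem_cons_of_mem hj))

theorem three_halves_lt_goldenRatio : 3 / 2 < φ := by
  nlinarith [goldenRatio_sq, goldenRatio_pos]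

section Rounding

variable {x : ℝ}

theorem R_of_lt_goldenRatio (hx : x < φ) : R x = 1 :=
  if_pos hx

theorem R_of_mem_Ico (hx : x ∈ Set.Ico φ 2) : R x = 3 / 2 := by
  rw [R, if_neg hx.1.not_gt, if_pos hx.2]

theorem R_of_two_le (hx : 2 ≤ x) : R x = ⌊x⌋ := by
  rw [R, if_neg (goldenRatio_lt_two.le.trans hx).not_gt, if_neg hx.not_gt]

theorem lt_goldenRatio_or_mem_Ico_or_two_le (x : ℝ) : x < φ ∨ x ∈ Set.Ico φ 2 ∨ 2 ≤ x := by
  grind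

theorem R_add_le_self_of_mem_Ico (hx : x ∈ Set.Ico φ 2) : R x + (φ - 3 / 2) ≤ x := by
  rw [R_of_mem_Ico hx]
  linarith [hx.1]

theorem self_add_le_goldenRatio_mul_R_of_mem_Ico (hx : x ∈ Set.Ico φ 2) :
    x + (φ * (3 / 2) - 2) ≤ φ * R x := by
  rw [R_of_mem_Ico hx]
  linarith [hx.2]

theorem R_le_self (hx : 1 ≤ x) : R x ≤ x := by
  rcases lt_goldenRatio_or_mem_Ico_or_two_le x with h | h | h
  · rwa [R_of_lt_goldenRatio h]
  · linarith [R_add_le_self_of_mem_Ico h, three_halves_lt_goldenRatio]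
  · rw [R_of_two_le h]
    exact Int.floor_le x

theorem self_le_goldenRatio_mul_R (x : ℝ) : x ≤ φ * R x := by
  rcases lt_goldenRatio_or_mem_Ico_or_two_le x with h | h | h
  · rw [R_of_lt_goldenRatio h, mul_one]
    exact h.le
  · linarith [self_add_le_goldenRatio_mul_R_of_mem_Ico h, three_halves_lt_goldenRatio]
  · have two_le_floor : (2 : ℝ) ≤ ⌊x⌋ := by exact_mod_cast Int.le_floor.mpr h
    calc
      x ≤ ⌊x⌋ + 1 := (Int.lt_floor_add_one x).le
      _ ≤ 3 / 2 * ⌊x⌋ := by linarith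
      _ ≤ φ * R x := by
        rw [R_of_two_le h]
        gcongr
        exact three_halves_lt_goldenRatio.le

theorem R_mem_zmultiples_one_of_notMem_Ico (hx : x ∉ Set.Ico φ 2) :
    R x ∈ AddSubgroup.zmultiples (1 : ℝ) := by
  rcases lt_goldenRatio_or_mem_Ico_or_two_le x with h | h | h
  · rw [R_of_lt_goldenRatio h]
    exact AddSubgroup.mem_zmultiples 1
  · exact absurd h hx
  · rw [R_of_two_le h]
    exact AddSubgroup.intCast_mem_zmultiples_one _

theorem R_mem_zmultiples_half (x : ℝ) : R x ∈ AddSubgroup.zmultiples (1 / 2 : ℝ) := by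
  by_cases hx : x ∈ Set.Ico φ 2
  · exact AddSubgroup.mem_zmultiples_iff.mpr ⟨3, by rw [R_of_mem_Ico hx]; norm_num⟩
  · have one_mem : (1 : ℝ) ∈ AddSubgroup.zmultiples (1 / 2 : ℝ) :=
      AddSubgroup.mem_zmultiples_iff.mpr ⟨2, by norm_num⟩
    exact AddSubgroup.zmultiples_le_of_mem one_mem (R_mem_zmultiples_one_of_notMem_Ico hx)

end Rounding

section RoundedLoad

variable {S S' : Multiset ℝ} {x : ℝ}

theorem sum_map_R_mem {H : AddSubgroup ℝ} (h : ∀ x ∈ S, R x ∈ H) : (S.map R).sum ∈ H :=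
  H.multiset_sum_mem _ (Multiset.forall_mem_map_iff.mpr h)

theorem sum_map_R_le_sum (hS : ∀ x ∈ S, 1 ≤ x) : (S.map R).sum ≤ S.sum :=
  Multiset.sum_map_le_sum R fun x hx ↦ R_le_self (hS x hx)

theorem sum_le_goldenRatio_mul_sum_map_R (S : Multiset ℝ) : S.sum ≤ φ * (S.map R).sum := by
  rw [← Multiset.sum_map_mul_left]
  exact Multiset.sum_le_sum_map _ fun x _ ↦ self_le_goldenRatio_mul_R x

theorem sum_map_R_add_le_sum_of_mem_Ico (hS : ∀ x ∈ S, 1 ≤ x) (hxS : x ∈ S)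
    (hx : x ∈ Set.Ico φ 2) : (S.map R).sum + (φ - 3 / 2) ≤ S.sum := by
  simpa only [Multiset.map_id'] using sum_map_add_le_sum_map_of_mem (g := fun y ↦ y)
    (fun y hy ↦ R_le_self (hS y hy)) hxS (R_add_le_self_of_mem_Ico hx)

theorem sum_add_le_goldenRatio_mul_sum_map_R_of_mem_Ico (hxS : x ∈ S)
    (hx : x ∈ Set.Ico φ 2) : S.sum + (φ * (3 / 2) - 2) ≤ φ * (S.map R).sum := by
  simpa only [Multiset.map_id', Multiset.sum_map_mul_left] using
    sum_map_add_le_sum_map_of_mem (f := fun y ↦ y)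
      (fun y _ ↦ self_le_goldenRatio_mul_R y) hxS (self_add_le_goldenRatio_mul_R_of_mem_Ico hx)

theorem sum_map_R_lt_add_one (hS' : ∀ x ∈ S', 1 ≤ x) (h : φ * S'.sum < 1 + S.sum) :
    (S'.map R).sum < (S.map R).sum + 1 := by
  refine lt_of_mul_lt_mul_left ?_ goldenRatio_pos.le
  calc
    φ * (S'.map R).sum ≤ φ * S'.sum :=
      mul_le_mul_of_nonneg_left (sum_map_R_le_sum hS') goldenRatio_pos.le
    _ < 1 + S.sum := h
    _ ≤ φ * ((S.map R).sum + 1) := by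
      linarith [sum_le_goldenRatio_mul_sum_map_R S, one_lt_goldenRatio]

theorem sum_map_R_lt_add_half_of_mem_left (hS' : ∀ x ∈ S', 1 ≤ x)
    (h : φ * S'.sum < 1 + S.sum) (hxS' : x ∈ S') (hx : x ∈ Set.Ico φ 2) :
    (S'.map R).sum < (S.map R).sum + 1 / 2 := by
  have load_le : (S'.map R).sum ≤ S'.sum - (φ - 3 / 2) :=
    le_sub_iff_add_le.mpr (sum_map_R_add_le_sum_of_mem_Ico hS' hxS' hx)
  refine lt_of_mul_lt_mul_left ?_ goldenRatio_pos.le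
  calc
    φ * (S'.map R).sum ≤ φ * (S'.sum - (φ - 3 / 2)) :=
      mul_le_mul_of_nonneg_left load_le goldenRatio_pos.le
    _ = φ * S'.sum - (1 - φ / 2) := by linear_combination -goldenRatio_sq
    _ < S.sum + φ / 2 := by linarith
    _ ≤ φ * ((S.map R).sum + 1 / 2) := by linarith [sum_le_goldenRatio_mul_sum_map_R S]

theorem sum_map_R_lt_add_half_of_mem_right (hS' : ∀ x ∈ S', 1 ≤ x)
    (h : φ * S'.sum < 1 + S.sum) (hxS : x ∈ S) (hx : x ∈ Set.Ico φ 2) :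
    (S'.map R).sum < (S.map R).sum + 1 / 2 := by
  refine lt_of_mul_lt_mul_left ?_ goldenRatio_pos.le
  calc
    φ * (S'.map R).sum ≤ φ * S'.sum :=
      mul_le_mul_of_nonneg_left (sum_map_R_le_sum hS') goldenRatio_pos.le
    _ < 1 + S.sum := h
    _ ≤ φ * ((S.map R).sum + 1 / 2) := by
      linarith [sum_add_le_goldenRatio_mul_sum_map_R_of_mem_Ico hxS hx,
        three_halves_lt_goldenRatio]

theorem sum_map_R_lt_add_half_of_mem_Ico (hS' : ∀ x ∈ S', 1 ≤ x)
    (h : φ * S'.sum < 1 + S.sum) (hxSS' : x ∈ S' ∨ x ∈ S) (hx : x ∈ Set.Ico φ 2) :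
    (S'.map R).sum < (S.map R).sum + 1 / 2 :=
  hxSS'.elim (sum_map_R_lt_add_half_of_mem_left hS' h · hx)
    (sum_map_R_lt_add_half_of_mem_right hS' h · hx)

end RoundedLoad

/-- If each element of the finite multisets `S` and `S'` is at least `1`,
`∑_{x ∈ S'} x ≤ v` and `1 + ∑_{x ∈ S} x > φ·v`, then
`∑_{x ∈ S'} R x ≤ ∑_{x ∈ S} R x`. -/
theorem rounded_load_comparison (v : ℝ) (hv : 0 < v)
    (S S' : Multiset ℝ)
    (hS : ∀ x ∈ S, (1 : ℝ) ≤ x) (hS' : ∀ x ∈ S', (1 : ℝ) ≤ x)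
    (hOpt : S'.sum ≤ v)
    (hAlg : 1 + S.sum > (1 + Real.sqrt 5) / 2 * v) :
    (S'.map R).sum ≤ (S.map R).sum := by
  have hgap : φ * S'.sum < 1 + S.sum :=
    (mul_le_mul_of_nonneg_left hOpt goldenRatio_pos.le).trans_lt hAlg
  by_cases h : ∃ x, (x ∈ S' ∨ x ∈ S) ∧ x ∈ Set.Ico φ 2
  · obtain ⟨x, hxSS', hx⟩ := h
    exact le_of_mem_zmultiples_of_lt_add one_half_pos
      (sum_map_R_mem fun y _ ↦ R_mem_zmultiples_half y)
      (sum_map_R_mem fun y _ ↦ R_mem_zmultiples_half y)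
      (sum_map_R_lt_add_half_of_mem_Ico hS' hgap hxSS' hx)
  · have integral {x : ℝ} (hx : x ∈ S' ∨ x ∈ S) : R x ∈ AddSubgroup.zmultiples (1 : ℝ) :=
      R_mem_zmultiples_one_of_notMem_Ico fun hIco ↦ h ⟨x, hx, hIco⟩
    exact le_of_mem_zmultiples_of_lt_add one_pos
      (sum_map_R_mem fun _ hx ↦ integral (.inl hx))
      (sum_map_R_mem fun _ hx ↦ integral (.inr hx))
      (sum_map_R_lt_add_one hS' hgap)
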